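/- arXiv:2605.07459 — 3 statements merged into one kernel-verified Lean document; each statement's English description precedes it below -/
import Mathlib

section
/- There exists a unique vector v* : S → ℝ such that T v* = v*. -/
/-- The robust expected continuation value: `max_{p ∈ P} ∑_t p t * v t`
(the maximum is attained, by compactness; we use `sSup`). -/
noncomputable def robustSup {S : Type*} [Fintype S] (P : Set (S → ℝ)) (v : S → ℝ) : ℝ :=
  sSup ((fun p => ∑ t, p t * v t) '' P)

/-- The robust Bellman optimality operator
`(T v)(s) = c(s) + γ · min_{a ∈ A} max_{p ∈ P(s,a)} ∑_t p(t) v(t)`. -/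
noncomputable def bellmanT {S A : Type*} [Fintype S] [Fintype A] [Nonempty A]
    (c : S → ℝ) (γ : ℝ) (P : S → A → Set (S → ℝ)) (v : S → ℝ) : S → ℝ :=
  fun s => c s + γ * Finset.univ.inf' Finset.univ_nonempty (fun a => robustSup (P s a) v)

/-!
In the sup norm, `v ↦ ∑ t, p t * v t` is Lipschitz with constant the `ℓ¹` norm of `p`, which is `1`
for a probability vector. Suprema and minima of `K`-Lipschitz functions are `K`-Lipschitz, so the
Bellman operator is `γ`-Lipschitz on `S → ℝ` and Banach's fixed point theorem applies.
-/

open scoped NNReal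

section Lipschitz

variable {X ι : Type*} {K : ℝ≥0}

lemma lipschitzWith_pi {Y : ι → Type*} [Fintype ι] [PseudoEMetricSpace X]
    [∀ i, PseudoEMetricSpace (Y i)] {f : X → ∀ i, Y i} (hf : ∀ i, LipschitzWith K (f · i)) :
    LipschitzWith K f :=
  fun x y => edist_pi_le_iff.2 fun i => hf i x y

lemma lipschitzWith_finset_inf' [PseudoEMetricSpace X] {s : Finset ι} (hs : s.Nonempty)
    {f : ι → X → ℝ} (hf : ∀ i ∈ s, LipschitzWith K (f i)) :
    LipschitzWith K fun x => s.inf' hs (f · x) := by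
  have h : LipschitzWith K (s.inf' hs f) :=
    Finset.inf'_induction hs f (fun _ hg _ hh => max_self K ▸ hg.min hh) hf
  simpa only [← Finset.inf'_apply] using h

lemma lipschitzWith_sSup_image [PseudoMetricSpace X] {I : Set ι} (hI : I.Nonempty)
    {f : ι → X → ℝ} (hbdd : ∀ x, BddAbove ((f · x) '' I))
    (hf : ∀ i ∈ I, LipschitzWith K (f i)) :
    LipschitzWith K fun x => sSup ((f · x) '' I) := by
  refine LipschitzWith.of_le_add_mul K fun x y => csSup_le (hI.image _) ?_
  rintro _ ⟨i, hi, rfl⟩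
  calc f i x ≤ f i y + K * dist x y := (hf i hi).le_add_mul x y
    _ ≤ sSup ((f · y) '' I) + K * dist x y := by
      gcongr
      exact le_csSup (hbdd y) (Set.mem_image_of_mem _ hi)

lemma lipschitzWith_sum_mul {R : Type*} [NonUnitalSeminormedRing R] [Fintype ι] (p : ι → R) :
    LipschitzWith (∑ i, ‖p i‖₊) fun v : ι → R => ∑ i, p i * v i := by
  refine LipschitzWith.of_dist_le_mul fun v w => ?_
  calc dist (∑ i, p i * v i) (∑ i, p i * w i)
      ≤ ∑ i, dist (p i * v i) (p i * w i) := dist_sum_sum_le _ _ _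
    _ ≤ ∑ i, ‖p i‖ * dist v w := by
      gcongr with i
      rw [dist_eq_norm, ← mul_sub]
      refine (norm_mul_le _ _).trans ?_
      gcongr
      exact (dist_eq_norm (v i) (w i)).symm.trans_le (dist_le_pi_dist v w i)
    _ = (∑ i, ‖p i‖₊ : ℝ≥0) * dist v w := by
      rw [← Finset.sum_mul, NNReal.coe_sum]
      simp only [coe_nnnorm]

end Lipschitz

section Bellman

variable {S : Type*} [Fintype S] {K : ℝ≥0}

lemma sum_nnnorm_eq_one_of_mem_stdSimplex {p : S → ℝ} (hp : p ∈ stdSimplex ℝ S) :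
    ∑ t, ‖p t‖₊ = 1 := by
  rw [← NNReal.coe_inj, NNReal.coe_sum, NNReal.coe_one, ← hp.2]
  exact Finset.sum_congr rfl fun t _ => Real.norm_of_nonneg (hp.1 t)

lemma lipschitzWith_robustSup {P : Set (S → ℝ)} (hne : P.Nonempty)
    (hP : ∀ p ∈ P, ∑ t, ‖p t‖₊ ≤ K) : LipschitzWith K (robustSup P) := by
  have hlip : ∀ p ∈ P, LipschitzWith K fun v : S → ℝ => ∑ t, p t * v t :=
    fun p hp => (lipschitzWith_sum_mul p).weaken (hP p hp)
  refine lipschitzWith_sSup_image hne (fun v => ⟨K * ‖v‖, ?_⟩) hlip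
  rintro _ ⟨p, hp, rfl⟩
  exact (le_abs_self _).trans ((hlip p hp).norm_le_mul (by simp) v)

variable {A : Type*} [Fintype A] [Nonempty A] {P : S → A → Set (S → ℝ)}

lemma lipschitzWith_bellmanT (c : S → ℝ) (γ : ℝ) (hne : ∀ s a, (P s a).Nonempty)
    (hP : ∀ s a, ∀ p ∈ P s a, ∑ t, ‖p t‖₊ ≤ K) :
    LipschitzWith (‖γ‖₊ * K) (bellmanT c γ P) := by
  refine lipschitzWith_pi fun s => ?_
  have hmin : LipschitzWith K fun v =>
      Finset.univ.inf' Finset.univ_nonempty fun a => robustSup (P s a) v :=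
    lipschitzWith_finset_inf' _ fun a _ => lipschitzWith_robustSup (hne s a) (hP s a)
  rw [← zero_add (‖γ‖₊ * K)]
  exact (LipschitzWith.const (c s)).add ((lipschitzWith_smul γ).comp hmin)

theorem robust_bellman_unique_fixed_point_general (c : S → ℝ) (γ : ℝ)
    (hne : ∀ s a, (P s a).Nonempty) (hP : ∀ s a, ∀ p ∈ P s a, ∑ t, ‖p t‖₊ ≤ K)
    (hγK : ‖γ‖₊ * K < 1) :
    ∃! vstar : S → ℝ, bellmanT c γ P vstar = vstar := by
  have hT : ContractingWith (‖γ‖₊ * K) (bellmanT c γ P) :=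
    ⟨hγK, lipschitzWith_bellmanT c γ hne hP⟩
  exact ⟨hT.fixedPoint, hT.fixedPoint_isFixedPt, fun _ hv => hT.fixedPoint_unique hv⟩

end Bellman

/-- There exists a unique vector `v*` with `T v* = v*`. -/
theorem robust_bellman_unique_fixed_point {S A : Type*}
    [Fintype S] [Nonempty S] [Fintype A] [Nonempty A]
    (c : S → ℝ) (γ : ℝ) (hγ0 : 0 ≤ γ) (hγ1 : γ < 1)
    (P : S → A → Set (S → ℝ))
    (hne : ∀ s a, (P s a).Nonempty)
    (hcpt : ∀ s a, IsCompact (P s a))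
    (hsimplex : ∀ s a, ∀ p ∈ P s a, (∀ t, 0 ≤ p t) ∧ ∑ t, p t = 1) :
    ∃! vstar : S → ℝ, bellmanT c γ P vstar = vstar := by
  refine robust_bellman_unique_fixed_point_general (K := 1) c γ hne
    (fun s a p hp => (sum_nnnorm_eq_one_of_mem_stdSimplex (hsimplex s a p hp)).le) ?_
  simpa [← NNReal.coe_lt_coe, abs_of_nonneg hγ0] using hγ1
end

section
/- Let v* be the unique fixed point of T, let σ be an agent policy with value vector v^σ, and let s ∈ S with σ(s) = a. Then v^σ(s) − v*(s) ≥ γ · f(s,a). -/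
/-- The potential of a state-action pair:
`f(s,a) = max_{p ∈ P(s,a)} ∑_t p t * v* t − min_{a'} max_{p ∈ P(s,a')} ∑_t p t * v* t`. -/
noncomputable def potential {S A : Type*} [Fintype S] [Fintype A] [Nonempty A]
    (P : S → A → Set (S → ℝ)) (vstar : S → ℝ) (s : S) (a : A) : ℝ :=
  robustSup (P s a) vstar -
    Finset.univ.inf' Finset.univ_nonempty (fun a' => robustSup (P s a') vstar)

/-!
The fixed point `v*` satisfies `v* ≤ L v*`, where `L` is the robust evaluation operator of `σ`,
because a minimum over actions is at most its value at `σ s`. As `L` is monotone and adding a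
constant `k ≥ 0` to its argument raises its value by at most `γ * k` with `γ < 1`, a maximum
principle for `v* - vσ` gives `v* ≤ vσ`. Applying `L` to this inequality and subtracting the Bellman
equation of `v*` at `s` leaves the discounted potential.
-/

/-- The sub-probability vectors on `S`. Mass less than one is allowed, so that a transition may
terminate the process; `stdSimplex ℝ S` is the part of mass exactly one. -/
def subSimplex (S : Type*) [Fintype S] : Set (S → ℝ) :=
  {p | (∀ t, 0 ≤ p t) ∧ ∑ t, p t ≤ 1}

/-- The robust evaluation operator of a fixed agent policy, whose adversary chooses the transition
at `s` from `Q s`. The policy `σ` enters through `Q s = P s (σ s)`. -/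
noncomputable def robustEval {S : Type*} [Fintype S] (c : S → ℝ) (γ : ℝ)
    (Q : S → Set (S → ℝ)) (v : S → ℝ) : S → ℝ :=
  fun s => c s + γ * robustSup (Q s) v

theorem le_of_le_map_of_map_le {ι : Type*} [Finite ι] {F : (ι → ℝ) → ι → ℝ} {γ : ℝ} (hγ : γ < 1)
    (hF : ∀ v w : ι → ℝ, ∀ k : ℝ, 0 ≤ k → (∀ i, v i ≤ w i + k) → ∀ i, F v i ≤ F w i + γ * k)
    {v w : ι → ℝ} (hv : v ≤ F v) (hw : F w ≤ w) : v ≤ w := by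
  intro j
  have : Nonempty ι := ⟨j⟩
  obtain ⟨i, hi⟩ := Finite.exists_max (fun i => v i - w i)
  suffices hmax : v i - w i ≤ 0 from sub_nonpos.mp ((hi j).trans hmax)
  by_contra! hpos
  have hshift : F v i ≤ F w i + γ * (v i - w i) :=
    hF v w _ hpos.le (fun t => sub_le_iff_le_add'.mp (hi t)) i
  have hcontract : γ * (v i - w i) < v i - w i := mul_lt_of_lt_one_left hpos hγ
  linarith [hv i, hw i]

section RobustSup

variable {S : Type*} [Fintype S]

theorem stdSimplex_subset_subSimplex : stdSimplex ℝ S ⊆ subSimplex S :=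
  fun _ hp => ⟨hp.1, hp.2.le⟩

theorem sum_mul_le_sum_mul_add {p : S → ℝ} (hp : p ∈ subSimplex S) {v w : S → ℝ} {k : ℝ}
    (hk : 0 ≤ k) (hvw : ∀ t, v t ≤ w t + k) :
    ∑ t, p t * v t ≤ ∑ t, p t * w t + k :=
  calc ∑ t, p t * v t
      ≤ ∑ t, p t * (w t + k) :=
        Finset.sum_le_sum fun t _ => mul_le_mul_of_nonneg_left (hvw t) (hp.1 t)
    _ = ∑ t, p t * w t + (∑ t, p t) * k := by
        simp only [mul_add, Finset.sum_add_distrib, Finset.sum_mul]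
    _ ≤ ∑ t, p t * w t + k := by
        gcongr
        exact mul_le_of_le_one_left hk hp.2

theorem bddAbove_image_sum_mul {P : Set (S → ℝ)} (hP : P ⊆ subSimplex S) (v : S → ℝ) :
    BddAbove ((fun p : S → ℝ => ∑ t, p t * v t) '' P) := by
  refine ⟨‖v‖, Set.forall_mem_image.mpr fun p hp => ?_⟩
  have hv : ∀ t, v t ≤ (0 : S → ℝ) t + ‖v‖ := fun t => by
    simpa using (le_abs_self (v t)).trans (norm_le_pi_norm v t)
  simpa using sum_mul_le_sum_mul_add (hP hp) (norm_nonneg v) hv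

theorem robustSup_le_robustSup_add {P : Set (S → ℝ)} (hne : P.Nonempty) (hP : P ⊆ subSimplex S)
    {v w : S → ℝ} {k : ℝ} (hk : 0 ≤ k) (hvw : ∀ t, v t ≤ w t + k) :
    robustSup P v ≤ robustSup P w + k :=
  csSup_le (hne.image _) <| Set.forall_mem_image.mpr fun _ hp =>
    (sum_mul_le_sum_mul_add (hP hp) hk hvw).trans <|
      add_le_add_left (le_csSup (bddAbove_image_sum_mul hP w) (Set.mem_image_of_mem _ hp)) k

end RobustSup

section RobustEval

variable {S : Type*} [Fintype S] {γ : ℝ} {Q : S → Set (S → ℝ)}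

theorem robustEval_le_robustEval_add (c : S → ℝ) (hγ : 0 ≤ γ) (hne : ∀ s, (Q s).Nonempty)
    (hQ : ∀ s, Q s ⊆ subSimplex S) {v w : S → ℝ} {k : ℝ} (hk : 0 ≤ k)
    (hvw : ∀ t, v t ≤ w t + k) (s : S) :
    robustEval c γ Q v s ≤ robustEval c γ Q w s + γ * k := by
  have hsup := robustSup_le_robustSup_add (hne s) (hQ s) hk hvw
  unfold robustEval
  linarith [mul_le_mul_of_nonneg_left hsup hγ]

theorem robustEval_mono (c : S → ℝ) (hγ : 0 ≤ γ) (hne : ∀ s, (Q s).Nonempty)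
    (hQ : ∀ s, Q s ⊆ subSimplex S) : Monotone (robustEval c γ Q) := fun v w hvw s => by
  simpa using robustEval_le_robustEval_add c hγ hne hQ le_rfl (fun t => by simpa using hvw t) s

theorem le_of_le_robustEval_of_robustEval_le {c : S → ℝ} (hγ0 : 0 ≤ γ) (hγ1 : γ < 1)
    (hne : ∀ s, (Q s).Nonempty) (hQ : ∀ s, Q s ⊆ subSimplex S) {v w : S → ℝ}
    (hv : v ≤ robustEval c γ Q v) (hw : robustEval c γ Q w ≤ w) : v ≤ w :=
  le_of_le_map_of_map_le hγ1
    (fun _ _ _ hk hvw => robustEval_le_robustEval_add c hγ0 hne hQ hk hvw) hv hw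

end RobustEval

section Policy

variable {S A : Type*} [Fintype S] [Fintype A] [Nonempty A] {γ : ℝ}

theorem bellmanT_le_robustEval (c : S → ℝ) (hγ : 0 ≤ γ) (P : S → A → Set (S → ℝ)) (σ : S → A)
    (v : S → ℝ) : bellmanT c γ P v ≤ robustEval c γ (fun s => P s (σ s)) v := fun s =>
  add_le_add_right (mul_le_mul_of_nonneg_left (Finset.inf'_le _ (Finset.mem_univ (σ s))) hγ) (c s)

theorem mul_potential_eq_robustEval_sub_bellmanT (c : S → ℝ) (γ : ℝ) (P : S → A → Set (S → ℝ))
    (σ : S → A) (v : S → ℝ) (s : S) :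
    γ * potential P v s (σ s) =
      robustEval c γ (fun s => P s (σ s)) v s - bellmanT c γ P v s := by
  unfold potential robustEval bellmanT
  ring

theorem potential_lower_bound_general (c : S → ℝ) (hγ0 : 0 ≤ γ) (hγ1 : γ < 1)
    (P : S → A → Set (S → ℝ)) (hne : ∀ s a, (P s a).Nonempty)
    (hP : ∀ s a, P s a ⊆ subSimplex S) {v : S → ℝ} (hv : v ≤ bellmanT c γ P v) (σ : S → A)
    {w : S → ℝ} (hw : robustEval c γ (fun s => P s (σ s)) w ≤ w) (s : S) :
    γ * potential P v s (σ s) ≤ w s - v s := by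
  have hneσ : ∀ s, (P s (σ s)).Nonempty := fun s => hne s (σ s)
  have hPσ : ∀ s, P s (σ s) ⊆ subSimplex S := fun s => hP s (σ s)
  have hvw : v ≤ w := le_of_le_robustEval_of_robustEval_le hγ0 hγ1 hneσ hPσ
    (hv.trans (bellmanT_le_robustEval c hγ0 P σ v)) hw
  calc γ * potential P v s (σ s)
      = robustEval c γ (fun s => P s (σ s)) v s - bellmanT c γ P v s :=
        mul_potential_eq_robustEval_sub_bellmanT c γ P σ v s
    _ ≤ robustEval c γ (fun s => P s (σ s)) w s - v s :=
        sub_le_sub (robustEval_mono c hγ0 hneσ hPσ hvw s) (hv s)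
    _ ≤ w s - v s := sub_le_sub_right (hw s) (v s)

end Policy

/-- Lower bound via the potential: if `σ s = a` then `vσ s - v* s ≥ γ · f(s,a)`. -/
theorem potential_lower_bound {S A : Type*}
    [Fintype S] [Nonempty S] [Fintype A] [Nonempty A]
    (c : S → ℝ) (γ : ℝ) (hγ0 : 0 ≤ γ) (hγ1 : γ < 1)
    (P : S → A → Set (S → ℝ))
    (hne : ∀ s a, (P s a).Nonempty)
    (hcpt : ∀ s a, IsCompact (P s a))
    (hsimplex : ∀ s a, ∀ p ∈ P s a, (∀ t, 0 ≤ p t) ∧ ∑ t, p t = 1)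
    (vstar : S → ℝ) (hfix : bellmanT c γ P vstar = vstar)
    (σ : S → A) (vσ : S → ℝ)
    (hval : ∀ s, vσ s = c s + γ * robustSup (P s (σ s)) vσ)
    (s : S) (a : A) (hsa : σ s = a) :
    γ * potential P vstar s a ≤ vσ s - vstar s := by
  subst hsa
  exact potential_lower_bound_general c hγ0 hγ1 P hne
    (fun s a p hp => stdSimplex_subset_subSimplex (hsimplex s a p hp)) hfix.ge σ
    (fun s => (hval s).ge) s
end

section
/- Let v* be the unique fixed point of T and let σ be an agent policy with value vector v^σ. Then ‖v^σ − v*‖∞ ≤ (γ/(1−γ)) · max_{s∈S} f(s, σ(s)). -/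
/-!
The value vector `vσ` is the fixed point of the policy evaluation operator of `σ`, a contraction of
ratio `|γ|`, so its distance to any vector `v` is at most `1 / (1 - |γ|)` times the residual of `v`.
The residual of `v*` at `s` is exactly `γ * f(s, σ s)`, because `v*` is fixed by the optimality
operator.
-/

open Function

theorem norm_sum_mul_le_sum_norm_mul_norm {ι R : Type*} [Fintype ι]
    [NonUnitalSeminormedRing R] (p v : ι → R) :
    ‖∑ i, p i * v i‖ ≤ (∑ i, ‖p i‖) * ‖v‖ := by
  rw [Finset.sum_mul]
  exact norm_sum_le_of_le _ fun i _ =>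
    (norm_mul_le _ _).trans (mul_le_mul_of_nonneg_left (norm_le_pi_norm v i) (norm_nonneg _))

section RobustSup

variable {S : Type*} [Fintype S] {Q : Set (S → ℝ)}

theorem sum_mul_le_norm_of_sum_norm_le_one {p : S → ℝ} (hp : ∑ t, ‖p t‖ ≤ 1)
    (v : S → ℝ) : ∑ t, p t * v t ≤ ‖v‖ :=
  calc
    ∑ t, p t * v t ≤ ‖∑ t, p t * v t‖ := Real.le_norm_self _
    _ ≤ (∑ t, ‖p t‖) * ‖v‖ := norm_sum_mul_le_sum_norm_mul_norm p v
    _ ≤ ‖v‖ := mul_le_of_le_one_left (norm_nonneg v) hp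

theorem sum_mul_le_robustSup (hQ : ∀ p ∈ Q, ∑ t, ‖p t‖ ≤ 1) (v : S → ℝ) {p : S → ℝ}
    (hp : p ∈ Q) : ∑ t, p t * v t ≤ robustSup Q v :=
  le_csSup ⟨‖v‖, Set.forall_mem_image.2 fun q hq =>
    sum_mul_le_norm_of_sum_norm_le_one (hQ q hq) v⟩
    (Set.mem_image_of_mem _ hp)

theorem lipschitzWith_robustSup_s8 (hne : Q.Nonempty) (hQ : ∀ p ∈ Q, ∑ t, ‖p t‖ ≤ 1) :
    LipschitzWith 1 (robustSup Q) := by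
  refine LipschitzWith.of_le_add fun u v =>
    csSup_le (hne.image _) (Set.forall_mem_image.2 fun p hp => ?_)
  calc
    ∑ t, p t * u t = ∑ t, p t * v t + ∑ t, p t * (u - v) t := by
      simp only [Pi.sub_apply, mul_sub, Finset.sum_sub_distrib, add_sub_cancel]
    _ ≤ robustSup Q v + ‖u - v‖ :=
      add_le_add (sum_mul_le_robustSup hQ v hp)
        (sum_mul_le_norm_of_sum_norm_le_one (hQ p hp) (u - v))
    _ = robustSup Q v + dist u v := by rw [dist_eq_norm]

end RobustSup

section Policy

variable {S A : Type*} [Fintype S]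

/-- The robust policy evaluation operator of the agent policy `σ`. Its fixed points are the value
vectors of `σ`. -/
noncomputable def policyBellman (c : S → ℝ) (γ : ℝ) (P : S → A → Set (S → ℝ)) (σ : S → A)
    (v : S → ℝ) : S → ℝ :=
  fun s => c s + γ * robustSup (P s (σ s)) v

theorem lipschitzWith_policyBellman (c : S → ℝ) (γ : ℝ) {P : S → A → Set (S → ℝ)} {σ : S → A}
    (hne : ∀ s, (P s (σ s)).Nonempty) (hP : ∀ s, ∀ p ∈ P s (σ s), ∑ t, ‖p t‖ ≤ 1) :
    LipschitzWith ‖γ‖₊ (policyBellman c γ P σ) := by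
  refine LipschitzWith.of_dist_le_mul fun u v => (dist_pi_le_iff (by positivity)).2 fun s => ?_
  calc
    dist (policyBellman c γ P σ u s) (policyBellman c γ P σ v s)
        = ‖γ‖ * dist (robustSup (P s (σ s)) u) (robustSup (P s (σ s)) v) := by
      rw [policyBellman, policyBellman, dist_add_left, dist_eq_norm, ← mul_sub, norm_mul,
        dist_eq_norm]
    _ ≤ ‖γ‖ * dist u v := by
      gcongr
      simpa only [NNReal.coe_one, one_mul] using
        (lipschitzWith_robustSup_s8 (hne s) (hP s)).dist_le_mul u v

variable [Fintype A] [Nonempty A]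

theorem potential_nonneg (P : S → A → Set (S → ℝ)) (v : S → ℝ) (s : S) (a : A) :
    0 ≤ potential P v s a :=
  sub_nonneg.2 (Finset.inf'_le _ (Finset.mem_univ a))

theorem policyBellman_sub_bellmanT (c : S → ℝ) (γ : ℝ) (P : S → A → Set (S → ℝ)) (σ : S → A)
    (v : S → ℝ) (s : S) :
    policyBellman c γ P σ v s - bellmanT c γ P v s = γ * potential P v s (σ s) := by
  rw [policyBellman, bellmanT, potential]
  ring

theorem dist_bellmanT_policyBellman_le [Nonempty S] (c : S → ℝ) (γ : ℝ)
    (P : S → A → Set (S → ℝ)) (σ : S → A) (v : S → ℝ) :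
    dist (bellmanT c γ P v) (policyBellman c γ P σ v) ≤
      ‖γ‖ * Finset.univ.sup' Finset.univ_nonempty (fun s => potential P v s (σ s)) := by
  refine dist_pi_le_iff'.2 fun s => ?_
  rw [dist_comm, dist_eq_norm, policyBellman_sub_bellmanT, norm_mul,
    Real.norm_of_nonneg (potential_nonneg P v s (σ s))]
  gcongr
  exact Finset.le_sup' (fun s => potential P v s (σ s)) (Finset.mem_univ s)

end Policy

theorem potential_upper_bound_general {S A : Type*}
    [Fintype S] [Nonempty S] [Fintype A] [Nonempty A]
    (c : S → ℝ) (γ : ℝ) (hγ : ‖γ‖ < 1) (P : S → A → Set (S → ℝ))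
    (hne : ∀ s a, (P s a).Nonempty) (hP : ∀ s a, ∀ p ∈ P s a, ∑ t, ‖p t‖ ≤ 1)
    (vstar : S → ℝ) (hvstar : IsFixedPt (bellmanT c γ P) vstar)
    (σ : S → A) (vσ : S → ℝ) (hvσ : IsFixedPt (policyBellman c γ P σ) vσ) :
    ‖vσ - vstar‖ ≤ ‖γ‖ / (1 - ‖γ‖) *
      Finset.univ.sup' Finset.univ_nonempty (fun s => potential P vstar s (σ s)) := by
  have hcontr : ContractingWith ‖γ‖₊ (policyBellman c γ P σ) :=
    ⟨hγ, lipschitzWith_policyBellman c γ (fun s => hne s (σ s)) fun s => hP s (σ s)⟩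
  have hresidual := dist_bellmanT_policyBellman_le c γ P σ vstar
  rw [hvstar.eq] at hresidual
  calc
    ‖vσ - vstar‖ = dist vstar vσ := by rw [dist_comm, dist_eq_norm]
    _ ≤ dist vstar (policyBellman c γ P σ vstar) / (1 - ‖γ‖) :=
      hcontr.dist_le_of_fixedPoint vstar hvσ
    _ ≤ ‖γ‖ * Finset.univ.sup' Finset.univ_nonempty (fun s => potential P vstar s (σ s)) /
          (1 - ‖γ‖) :=
      div_le_div_of_nonneg_right hresidual (sub_nonneg.2 hγ.le)
    _ = _ := mul_div_right_comm _ _ _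

/-- Upper bound via the potential:
`‖vσ - v*‖∞ ≤ (γ/(1-γ)) · max_{s} f(s, σ s)`. -/
theorem potential_upper_bound {S A : Type*}
    [Fintype S] [Nonempty S] [Fintype A] [Nonempty A]
    (c : S → ℝ) (γ : ℝ) (hγ0 : 0 ≤ γ) (hγ1 : γ < 1)
    (P : S → A → Set (S → ℝ))
    (hne : ∀ s a, (P s a).Nonempty)
    (hcpt : ∀ s a, IsCompact (P s a))
    (hsimplex : ∀ s a, ∀ p ∈ P s a, (∀ t, 0 ≤ p t) ∧ ∑ t, p t = 1)
    (vstar : S → ℝ) (hfix : bellmanT c γ P vstar = vstar)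
    (σ : S → A) (vσ : S → ℝ)
    (hval : ∀ s, vσ s = c s + γ * robustSup (P s (σ s)) vσ) :
    ‖vσ - vstar‖ ≤ γ / (1 - γ) *
      Finset.univ.sup' Finset.univ_nonempty (fun s => potential P vstar s (σ s)) := by
  have hP : ∀ s a, ∀ p ∈ P s a, ∑ t, ‖p t‖ ≤ 1 := fun s a p hp =>
    ((Finset.sum_congr rfl fun t _ => Real.norm_of_nonneg ((hsimplex s a p hp).1 t)).trans
      (hsimplex s a p hp).2).le
  simpa only [Real.norm_of_nonneg hγ0] using potential_upper_bound_general c γ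
    ((Real.norm_of_nonneg hγ0).trans_lt hγ1) P hne hP vstar hfix σ vσ (funext hval).symm
end
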